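/- arXiv:1407.4315 — 5 statements merged into one kernel-verified Lean document; each statement's English description precedes it below -/
import Mathlib

section
/- Let S = Σ_{k≥1} 1/k². For every integer r ≥ 1 and every integer n ≥ 1 one has n² · Σ 1/(k₁² k₂² ⋯ k_r²) ≤ (4S)^{r−1}, where the sum runs over all r-tuples (k₁,…,k_r) of positive integers with k₁ + ⋯ + k_r = n. -/
open scoped BigOperators

/-- Splitting off the first entry of a tuple with prescribed sum. -/
theorem sum_antidiagonalTuple_succ_prod {R : Type*} [CommSemiring R] (f : ℕ → R) (r n : ℕ) :
    ∑ k ∈ Finset.Nat.antidiagonalTuple (r + 1) n, ∏ i, f (k i) =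
      ∑ p ∈ Finset.HasAntidiagonal.antidiagonal n,
        f p.1 * ∑ k ∈ Finset.Nat.antidiagonalTuple r p.2, ∏ i, f (k i) := by
  simp_rw [Finset.mul_sum]
  rw [Finset.sum_sigma']
  refine Finset.sum_bij' (fun k _ => ⟨(k 0, ∑ i, Fin.tail k i), Fin.tail k⟩)
    (fun x _ => Fin.cons x.1.1 x.2) ?_ ?_ ?_ ?_ ?_
  · intro k hk
    rw [Finset.Nat.mem_antidiagonalTuple, Fin.sum_univ_succ] at hk
    simpa [Finset.Nat.mem_antidiagonalTuple, Fin.tail] using hk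
  · rintro ⟨⟨a, b⟩, k⟩ hx
    simp only [Finset.mem_sigma, Finset.HasAntidiagonal.mem_antidiagonal,
      Finset.Nat.mem_antidiagonalTuple] at hx
    simp [Finset.Nat.mem_antidiagonalTuple, Fin.sum_univ_succ, hx.2, hx.1]
  · intro k _
    simp
  · rintro ⟨⟨a, b⟩, k⟩ hx
    simp only [Finset.mem_sigma, Finset.HasAntidiagonal.mem_antidiagonal,
      Finset.Nat.mem_antidiagonalTuple] at hx
    simp [hx.2]
  · intro k _
    simp [Fin.prod_univ_succ, Fin.tail]

theorem sum_range_one_div_sq_le_tsum (n : ℕ) :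
    ∑ k ∈ Finset.range (n + 1), 1 / (k : ℝ) ^ 2 ≤ ∑' k : ℕ, 1 / ((k : ℝ) + 1) ^ 2 := by
  have hs : Summable fun k : ℕ => 1 / (k : ℝ) ^ 2 :=
    Real.summable_one_div_nat_pow.mpr one_lt_two
  have h := hs.sum_le_tsum (Finset.range (n + 1)) fun _ _ => by positivity
  rw [hs.tsum_eq_zero_add] at h
  simpa using h

theorem one_div_sq_mul_one_div_sq_le (a b : ℕ) :
    1 / (a : ℝ) ^ 2 * (1 / (b : ℝ) ^ 2) ≤
      2 * (1 / (a : ℝ) ^ 2 + 1 / (b : ℝ) ^ 2) * (1 / ((a + b : ℕ) : ℝ) ^ 2) := by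
  rcases Nat.eq_zero_or_pos a with rfl | ha
  · simp only [Nat.cast_zero, ne_eq, OfNat.ofNat_ne_zero, not_false_eq_true, zero_pow, div_zero,
      zero_mul]
    positivity
  rcases Nat.eq_zero_or_pos b with rfl | hb
  · simp only [Nat.cast_zero, ne_eq, OfNat.ofNat_ne_zero, not_false_eq_true, zero_pow, div_zero,
      mul_zero]
    positivity
  have ha' : (0 : ℝ) < a := by exact_mod_cast ha
  have hb' : (0 : ℝ) < b := by exact_mod_cast hb
  have h : 2 * (1 / (a : ℝ) ^ 2 + 1 / (b : ℝ) ^ 2) * (1 / ((a + b : ℕ) : ℝ) ^ 2) -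
      1 / (a : ℝ) ^ 2 * (1 / (b : ℝ) ^ 2) =
      ((a : ℝ) - b) ^ 2 / ((a : ℝ) ^ 2 * (b : ℝ) ^ 2 * ((a : ℝ) + b) ^ 2) := by
    push_cast
    field_simp
    ring
  rw [← sub_nonneg, h]
  positivity

theorem sum_antidiagonal_one_div_sq_mul_le (n : ℕ) :
    ∑ p ∈ Finset.HasAntidiagonal.antidiagonal n, 1 / (p.1 : ℝ) ^ 2 * (1 / (p.2 : ℝ) ^ 2) ≤
      4 * (∑' k : ℕ, 1 / ((k : ℝ) + 1) ^ 2) * (1 / (n : ℝ) ^ 2) := by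
  have hfst : ∑ p ∈ Finset.HasAntidiagonal.antidiagonal n, 1 / (p.1 : ℝ) ^ 2 =
      ∑ k ∈ Finset.range (n + 1), 1 / (k : ℝ) ^ 2 :=
    Finset.Nat.sum_antidiagonal_eq_sum_range_succ_mk (fun p : ℕ × ℕ => 1 / (p.1 : ℝ) ^ 2) n
  have hsnd : ∑ p ∈ Finset.HasAntidiagonal.antidiagonal n, 1 / (p.2 : ℝ) ^ 2 =
      ∑ p ∈ Finset.HasAntidiagonal.antidiagonal n, 1 / (p.1 : ℝ) ^ 2 :=
    Finset.Nat.sum_antidiagonal_swap (f := fun p : ℕ × ℕ => 1 / (p.1 : ℝ) ^ 2)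
  calc ∑ p ∈ Finset.HasAntidiagonal.antidiagonal n, 1 / (p.1 : ℝ) ^ 2 * (1 / (p.2 : ℝ) ^ 2)
      ≤ ∑ p ∈ Finset.HasAntidiagonal.antidiagonal n,
          2 * (1 / (p.1 : ℝ) ^ 2 + 1 / (p.2 : ℝ) ^ 2) * (1 / (n : ℝ) ^ 2) := by
        refine Finset.sum_le_sum fun p hp => ?_
        rw [← Finset.HasAntidiagonal.mem_antidiagonal.mp hp]
        exact one_div_sq_mul_one_div_sq_le p.1 p.2
    _ = 4 * (∑ k ∈ Finset.range (n + 1), 1 / (k : ℝ) ^ 2) * (1 / (n : ℝ) ^ 2) := by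
        rw [← Finset.sum_mul, ← Finset.mul_sum, Finset.sum_add_distrib, hsnd, hfst]
        ring
    _ ≤ _ := by
        gcongr
        exact sum_range_one_div_sq_le_tsum n

theorem sum_antidiagonalTuple_prod_one_div_sq_le (r n : ℕ) :
    ∑ k ∈ Finset.Nat.antidiagonalTuple (r + 1) n, ∏ i, (1 / (k i : ℝ) ^ 2) ≤
      (4 * ∑' k : ℕ, 1 / ((k : ℝ) + 1) ^ 2) ^ r * (1 / (n : ℝ) ^ 2) := by
  have hS : 0 ≤ ∑' k : ℕ, 1 / ((k : ℝ) + 1) ^ 2 := tsum_nonneg fun _ => by positivity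
  induction r generalizing n with
  | zero => simp [Finset.Nat.antidiagonalTuple_one]
  | succ r ih =>
    rw [sum_antidiagonalTuple_succ_prod (fun m : ℕ => 1 / (m : ℝ) ^ 2)]
    calc _ ≤ ∑ p ∈ Finset.HasAntidiagonal.antidiagonal n, 1 / (p.1 : ℝ) ^ 2 *
          ((4 * ∑' k : ℕ, 1 / ((k : ℝ) + 1) ^ 2) ^ r * (1 / (p.2 : ℝ) ^ 2)) :=
          Finset.sum_le_sum fun p _ => mul_le_mul_of_nonneg_left (ih p.2) (by positivity)
      _ = (4 * ∑' k : ℕ, 1 / ((k : ℝ) + 1) ^ 2) ^ r *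
          ∑ p ∈ Finset.HasAntidiagonal.antidiagonal n, 1 / (p.1 : ℝ) ^ 2 * (1 / (p.2 : ℝ) ^ 2) := by
          rw [Finset.mul_sum]
          exact Finset.sum_congr rfl fun p _ => mul_left_comm _ _ _
      _ ≤ _ := by
          rw [pow_succ, mul_assoc]
          exact mul_le_mul_of_nonneg_left (sum_antidiagonal_one_div_sq_mul_le n) (by positivity)

/-- With `S = Σ_{k≥1} 1/k²`, for every `r ≥ 1` and `n ≥ 1`,
`n² · Σ_{k₁+⋯+k_r=n, kᵢ≥1} 1/(k₁²⋯k_r²) ≤ (4S)^{r−1}`. -/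
theorem stmt_0 (S : ℝ) (hS : S = ∑' k : ℕ, 1 / ((k : ℝ) + 1) ^ 2)
    (r n : ℕ) (hr : 1 ≤ r) (hn : 1 ≤ n) :
    (n : ℝ) ^ 2 *
        ∑ k ∈ (Finset.Nat.antidiagonalTuple r n).filter (fun k => ∀ i, 1 ≤ k i),
          ∏ i, (1 / ((k i : ℝ)) ^ 2) ≤
      (4 * S) ^ (r - 1) := by
  obtain ⟨r, rfl⟩ := Nat.exists_eq_add_of_le' hr
  have hn' : (0 : ℝ) < n := by exact_mod_cast hn
  rw [Nat.add_sub_cancel, hS]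
  calc _ ≤ (n : ℝ) ^ 2 *
        ∑ k ∈ Finset.Nat.antidiagonalTuple (r + 1) n, ∏ i, (1 / (k i : ℝ) ^ 2) := by
        gcongr
        exact Finset.filter_subset _ _
    _ ≤ (n : ℝ) ^ 2 * ((4 * ∑' k : ℕ, 1 / ((k : ℝ) + 1) ^ 2) ^ r * (1 / (n : ℝ) ^ 2)) := by
        gcongr
        exact sum_antidiagonalTuple_prod_one_div_sq_le r n
    _ = _ := by field_simp
end

section
/- For every real s > 1/2 and σ ≥ 0 there exists a constant C_{s,σ} > 0 such that for every integer N ≥ 1 and every integer k one has Σ_{l=0}^{N−1} ( ⟦k⟧^{s} e^{σ d_N(k)} / ( ⟦l⟧^{s} ⟦k−l⟧^{s} e^{σ d_N(l)} e^{σ d_N(k−l)} ) )² ≤ C_{s,σ}², where d_N(m) denotes the distance from the integer m to Nℤ and ⟦m⟧ := max(1, d_N(m)). -/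
open scoped BigOperators

/-- `d_N(k)`: the distance from the integer `k` to `Nℤ`. -/
noncomputable def dN (N : ℕ) (k : ℤ) : ℝ :=
  min ((k % (N : ℤ) : ℤ) : ℝ) ((N : ℝ) - ((k % (N : ℤ) : ℤ) : ℝ))

theorem dN_add_le (N : ℕ) (hN : 1 ≤ N) (a b : ℤ) : dN N (a + b) ≤ dN N a + dN N b := by
  have hN' : (0 : ℤ) < N := by exact_mod_cast hN
  have ha := Int.emod_nonneg a hN'.ne'
  have hb := Int.emod_nonneg b hN'.ne'
  have ha' := Int.emod_lt_of_pos a hN'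
  have hb' := Int.emod_lt_of_pos b hN'
  have key : min ((a + b) % (N : ℤ)) (N - (a + b) % (N : ℤ)) ≤
      min (a % (N : ℤ)) (N - a % (N : ℤ)) + min (b % (N : ℤ)) (N - b % (N : ℤ)) := by
    have h : (a + b) % (N : ℤ) = a % N + b % N ∨ (a + b) % (N : ℤ) = a % N + b % N - N := by
      rw [Int.add_emod]
      rcases lt_or_ge (a % (N : ℤ) + b % N) N with h | h
      · left
        exact Int.emod_eq_of_lt (by omega) h
      · right
        rw [← Int.sub_emod_right]
        exact Int.emod_eq_of_lt (by omega) (by omega)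
    rcases h with h | h <;> rw [h] <;> omega
  unfold dN
  exact_mod_cast key

/-- The weight `⟦m⟧ ^ r` is controlled by its values at the two representatives of `m`
modulo `N` nearest to `0`. -/
theorem max_one_dN_rpow_le (N : ℕ) (r : ℝ) (m : ℤ) :
    max 1 (dN N m) ^ r ≤ max 1 ((m % (N : ℤ) : ℤ) : ℝ) ^ r +
      max 1 ((N : ℝ) - ((m % (N : ℤ) : ℤ) : ℝ)) ^ r := by
  have h₁ : (0 : ℝ) ≤ max 1 ((m % (N : ℤ) : ℤ) : ℝ) ^ r := by positivity
  have h₂ : (0 : ℝ) ≤ max 1 ((N : ℝ) - ((m % (N : ℤ) : ℤ) : ℝ)) ^ r := by positivity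
  unfold dN
  rcases min_choice ((m % (N : ℤ) : ℤ) : ℝ) ((N : ℝ) - ((m % (N : ℤ) : ℤ) : ℝ)) with h | h <;>
    rw [h] <;> linarith

theorem summable_max_one_rpow {r : ℝ} (hr : r < -1) :
    Summable fun n : ℕ => max 1 (n : ℝ) ^ r := by
  rw [← summable_nat_add_iff 1]
  refine ((summable_nat_add_iff 1).2 (Real.summable_nat_rpow.2 hr)).congr fun n => ?_
  rw [max_eq_right (by push_cast; linarith [n.cast_nonneg (α := ℝ)])]

theorem sum_max_one_dN_rpow_le (N : ℕ) {r : ℝ} (hr : r < -1) :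
    ∑ l ∈ Finset.range N, max 1 (dN N (l : ℤ)) ^ r ≤ 2 * ∑' n : ℕ, max 1 (n : ℝ) ^ r := by
  have hsum := summable_max_one_rpow hr
  have h₀ : ∀ n : ℕ, (0 : ℝ) ≤ max 1 (n : ℝ) ^ r := fun n => by positivity
  calc
    ∑ l ∈ Finset.range N, max 1 (dN N (l : ℤ)) ^ r
      ≤ ∑ l ∈ Finset.range N,
          (max 1 (l : ℝ) ^ r + max 1 ((N - 1 - l + 1 : ℕ) : ℝ) ^ r) := by
        refine Finset.sum_le_sum fun l hl => ?_
        rw [Finset.mem_range] at hl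
        have hmod : (l : ℤ) % (N : ℤ) = l := Int.emod_eq_of_lt (by omega) (by omega)
        have hcast : ((N - 1 - l + 1 : ℕ) : ℝ) = (N : ℝ) - l := by
          rw [← Nat.cast_sub hl.le]
          congr 1
          omega
        simpa only [hmod, hcast, Int.cast_natCast] using max_one_dN_rpow_le N r (l : ℤ)
    _ = ∑ l ∈ Finset.range N, max 1 (l : ℝ) ^ r +
          ∑ l ∈ Finset.range N, max 1 ((l + 1 : ℕ) : ℝ) ^ r := by
        rw [Finset.sum_add_distrib,
          Finset.sum_range_reflect (fun n => max 1 ((n + 1 : ℕ) : ℝ) ^ r) N]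
    _ ≤ ∑' n : ℕ, max 1 (n : ℝ) ^ r + ∑' n : ℕ, max 1 (n : ℝ) ^ r := by
        refine add_le_add (hsum.sum_le_tsum _ fun n _ => h₀ n) ?_
        have hshift := Finset.sum_range_succ' (fun n : ℕ => max 1 (n : ℝ) ^ r) N
        have hle := hsum.sum_le_tsum (Finset.range (N + 1)) fun n _ => h₀ n
        have := h₀ 0
        linarith
    _ = _ := by ring

theorem sum_dN_sub (N : ℕ) (hN : 1 ≤ N) (k : ℤ) (F : ℝ → ℝ) :
    ∑ l ∈ Finset.range N, F (dN N (k - (l : ℤ))) = ∑ l ∈ Finset.range N, F (dN N (l : ℤ)) := by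
  have hN' : (0 : ℤ) < N := by exact_mod_cast hN
  have hnn : ∀ m : ℤ, (((m % (N : ℤ)).toNat : ℕ) : ℤ) = m % N := fun m =>
    Int.toNat_of_nonneg (Int.emod_nonneg m hN'.ne')
  have hmem : ∀ l ∈ Finset.range N, ((k - (l : ℤ)) % (N : ℤ)).toNat ∈ Finset.range N := by
    intro l _
    have := Int.emod_lt_of_pos (k - (l : ℤ)) hN'
    have := hnn (k - l)
    rw [Finset.mem_range]
    omega
  have hinv : ∀ l ∈ Finset.range N,
      ((k - (((k - (l : ℤ)) % (N : ℤ)).toNat : ℕ)) % (N : ℤ)).toNat = l := by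
    intro l hl
    rw [Finset.mem_range] at hl
    rw [hnn, Int.sub_emod, Int.emod_emod, ← Int.sub_emod, sub_sub_cancel,
      Int.emod_eq_of_lt (by omega) (by omega), Int.toNat_natCast]
  refine Finset.sum_bij' (fun l _ => ((k - (l : ℤ)) % (N : ℤ)).toNat)
    (fun l _ => ((k - (l : ℤ)) % (N : ℤ)).toNat) hmem hmem hinv hinv fun l _ => ?_
  simp only [hnn, dN, Int.emod_emod]

theorem sq_weight_quotient_le_of_le {A B K a b c s σ : ℝ} (hA : 1 ≤ A) (hK : 0 ≤ K)
    (hs : 0 ≤ s) (hσ : 0 ≤ σ) (hAB : A ≤ B) (hKAB : K ≤ A + B) (hc : c ≤ a + b) :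
    (K ^ s * Real.exp (σ * c) / (A ^ s * B ^ s * Real.exp (σ * a) * Real.exp (σ * b))) ^ 2 ≤
      2 ^ (2 * s) * A ^ (-(2 * s)) := by
  have hA₀ : 0 < A := by linarith
  have hB₀ : 0 < B := by linarith
  have hpow : K ^ s ≤ 2 ^ s * B ^ s := by
    rw [← Real.mul_rpow (by norm_num) hB₀.le]
    exact Real.rpow_le_rpow hK (by linarith) hs
  have hexp : Real.exp (σ * c) ≤ Real.exp (σ * a) * Real.exp (σ * b) := by
    rw [← Real.exp_add, ← mul_add]
    exact Real.exp_le_exp.2 (mul_le_mul_of_nonneg_left hc hσ)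
  have hquot : K ^ s * Real.exp (σ * c) /
      (A ^ s * B ^ s * Real.exp (σ * a) * Real.exp (σ * b)) ≤ 2 ^ s * A ^ (-s) := by
    rw [div_le_iff₀ (by positivity), Real.rpow_neg hA₀.le]
    calc
      K ^ s * Real.exp (σ * c)
        ≤ (2 ^ s * B ^ s) * (Real.exp (σ * a) * Real.exp (σ * b)) := by gcongr
      _ = _ := by field_simp
  calc
    _ ≤ ((2 : ℝ) ^ s * A ^ (-s)) ^ 2 := by gcongr
    _ = _ := by
      rw [mul_pow, ← Real.rpow_mul_natCast (by norm_num), ← Real.rpow_mul_natCast hA₀.le]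
      congr 2 <;> push_cast <;> ring

theorem sq_weight_quotient_le {A B K a b c s σ : ℝ} (hA : 1 ≤ A) (hB : 1 ≤ B) (hK : 0 ≤ K)
    (hs : 0 ≤ s) (hσ : 0 ≤ σ) (hKAB : K ≤ A + B) (hc : c ≤ a + b) :
    (K ^ s * Real.exp (σ * c) / (A ^ s * B ^ s * Real.exp (σ * a) * Real.exp (σ * b))) ^ 2 ≤
      2 ^ (2 * s) * (A ^ (-(2 * s)) + B ^ (-(2 * s))) := by
  have hA₀ : 0 ≤ (2 : ℝ) ^ (2 * s) * A ^ (-(2 * s)) := by positivity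
  have hB₀ : 0 ≤ (2 : ℝ) ^ (2 * s) * B ^ (-(2 * s)) := by positivity
  rw [mul_add]
  rcases le_total A B with h | h
  · linarith [sq_weight_quotient_le_of_le hA hK hs hσ h hKAB hc]
  · have := sq_weight_quotient_le_of_le (a := b) (b := a) (c := c) hB hK hs hσ h
      (by linarith) (by linarith)
    rw [mul_comm (A ^ s), mul_right_comm (B ^ s * A ^ s)]
    linarith

/-- the key weight estimate: for `s > 1/2`, `σ ≥ 0` there is `C_{s,σ} > 0`
such that for every `N ≥ 1` and every integer `k`,
`Σ_{l=0}^{N−1} ( ⟦k⟧^s e^{σ d_N(k)} / (⟦l⟧^s ⟦k−l⟧^s e^{σ d_N(l)} e^{σ d_N(k−l)}) )² ≤ C²`,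
where `⟦m⟧ = max(1, d_N(m))`. -/
theorem stmt_4 (s σ : ℝ) (hs : 1 / 2 < s) (hσ : 0 ≤ σ) :
    ∃ C > 0, ∀ N : ℕ, 1 ≤ N → ∀ k : ℤ,
      ∑ l ∈ Finset.range N,
          (max 1 (dN N k) ^ s * Real.exp (σ * dN N k) /
              (max 1 (dN N (l : ℤ)) ^ s * max 1 (dN N (k - (l : ℤ))) ^ s *
                Real.exp (σ * dN N (l : ℤ)) * Real.exp (σ * dN N (k - (l : ℤ))))) ^ 2 ≤
        C ^ 2 := by
  have hr : -(2 * s) < -1 := by linarith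
  set S : ℝ := ∑' n : ℕ, max 1 (n : ℝ) ^ (-(2 * s))
  have hS : 0 ≤ S := tsum_nonneg fun n => by positivity
  set M : ℝ := 2 ^ (2 * s) * (4 * S)
  have hM : 0 ≤ M := by positivity
  refine ⟨M + 1, by positivity, fun N hN k => ?_⟩
  calc
    _ ≤ ∑ l ∈ Finset.range N, 2 ^ (2 * s) * (max 1 (dN N (l : ℤ)) ^ (-(2 * s)) +
          max 1 (dN N (k - (l : ℤ))) ^ (-(2 * s))) := by
        refine Finset.sum_le_sum fun l _ => ?_
        have htri : dN N k ≤ dN N (l : ℤ) + dN N (k - (l : ℤ)) := by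
          simpa using dN_add_le N hN (l : ℤ) (k - (l : ℤ))
        have h₁ := le_max_left 1 (dN N (l : ℤ))
        have h₂ := le_max_left 1 (dN N (k - (l : ℤ)))
        refine sq_weight_quotient_le h₁ h₂ (by positivity) (by linarith) hσ
          (max_le (by linarith) ?_) htri
        exact htri.trans (add_le_add (le_max_right _ _) (le_max_right _ _))
    _ ≤ M := by
        rw [← Finset.mul_sum, Finset.sum_add_distrib,
          sum_dN_sub N hN k fun x => max 1 x ^ (-(2 * s))]
        refine mul_le_mul_of_nonneg_left ?_ (by positivity)
        linarith [sum_max_one_dN_rpow_le N hr]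
    _ ≤ (M + 1) ^ 2 := by nlinarith
end

section
/- For every integer N ≥ 2 and all integers j, k with 0 ≤ j, k ≤ ⌊N/2⌋ one has |2cos(jπ/N) − 2cos(kπ/N)| ≥ 4|j² − k²|/N². In particular, if j ≠ k then |2cos(jπ/N) − 2cos(kπ/N)| ≥ 4/N². -/
/-- If `0 ≤ x ≤ y` and `x + y ≤ 1`, then `y² - x²` controls `cos (π x) - cos (π y)` from below. -/
theorem four_mul_sq_sub_sq_le_two_mul_cos_sub {x y : ℝ} (hx : 0 ≤ x) (hxy : x ≤ y)
    (h : x + y ≤ 1) :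
    4 * (y ^ 2 - x ^ 2) ≤ 2 * Real.cos (x * Real.pi) - 2 * Real.cos (y * Real.pi) := by
  have hpi := Real.pi_pos
  have sin_ge {t : ℝ} (h0 : 0 ≤ t) (h1 : t ≤ 1) : t ≤ Real.sin (t * Real.pi / 2) := by
    have := Real.mul_le_sin (x := t * Real.pi / 2) (by positivity) (by nlinarith)
    rwa [show 2 / Real.pi * (t * Real.pi / 2) = t by field_simp] at this
  have hprod := mul_le_mul (sin_ge (t := x + y) (by linarith) h)
    (sin_ge (t := y - x) (by linarith) (by linarith)) (by linarith)
    ((add_nonneg hx (hx.trans hxy)).trans (sin_ge (by linarith) h))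
  have hcos := Real.cos_sub_cos (x * Real.pi) (y * Real.pi)
  rw [show (x * Real.pi + y * Real.pi) / 2 = (x + y) * Real.pi / 2 by ring,
    show (x * Real.pi - y * Real.pi) / 2 = -((y - x) * Real.pi / 2) by ring, Real.sin_neg] at hcos
  linarith

/-- If `x, y ≥ 0` and `x + y ≤ 1`, then `|x² - y²|` controls `|cos (π x) - cos (π y)|`
from below. -/
theorem four_mul_abs_sq_sub_sq_le_abs_two_mul_cos_sub {x y : ℝ} (hx : 0 ≤ x) (hy : 0 ≤ y)
    (h : x + y ≤ 1) :
    4 * |x ^ 2 - y ^ 2| ≤ |2 * Real.cos (x * Real.pi) - 2 * Real.cos (y * Real.pi)| := by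
  wlog hxy : x ≤ y generalizing x y
  · rw [abs_sub_comm (x ^ 2), abs_sub_comm (2 * Real.cos _)]
    exact this hy hx (by linarith) (le_of_not_ge hxy)
  rw [abs_sub_comm (x ^ 2), abs_of_nonneg (sub_nonneg.2 (pow_le_pow_left₀ hx hxy 2))]
  exact (four_mul_sq_sub_sq_le_two_mul_cos_sub hx hxy h).trans (le_abs_self _)

/-- eigenvalue separation at one edge of the spectrum of the free Jacobi
matrix: for `N ≥ 2` and `0 ≤ j, k ≤ ⌊N/2⌋`,
`|2cos(jπ/N) − 2cos(kπ/N)| ≥ 4|j² − k²|/N²`; in particular if `j ≠ k` the left-hand side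
is at least `4/N²`. -/
theorem stmt_6 (N : ℕ) (hN : 2 ≤ N) (j k : ℕ) (hj : j ≤ N / 2) (hk : k ≤ N / 2) :
    4 * |(j : ℝ) ^ 2 - (k : ℝ) ^ 2| / (N : ℝ) ^ 2 ≤
        |2 * Real.cos ((j : ℝ) * Real.pi / N) - 2 * Real.cos ((k : ℝ) * Real.pi / N)| ∧
      (j ≠ k →
        4 / (N : ℝ) ^ 2 ≤
          |2 * Real.cos ((j : ℝ) * Real.pi / N) - 2 * Real.cos ((k : ℝ) * Real.pi / N)|) := by
  have hN0 : (0 : ℝ) < N := by exact_mod_cast (by omega : 0 < N)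
  have hjk : (j : ℝ) + k ≤ N := by exact_mod_cast (by omega : j + k ≤ N)
  have key : 4 * |(j : ℝ) ^ 2 - (k : ℝ) ^ 2| / (N : ℝ) ^ 2 ≤
      |2 * Real.cos ((j : ℝ) * Real.pi / N) - 2 * Real.cos ((k : ℝ) * Real.pi / N)| := by
    have := four_mul_abs_sq_sub_sq_le_abs_two_mul_cos_sub (x := j / N) (y := k / N)
      (by positivity) (by positivity) (by rwa [← add_div, div_le_one hN0])
    rwa [div_pow, div_pow, ← sub_div, abs_div, abs_of_pos (pow_pos hN0 2), ← mul_div_assoc,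
      div_mul_eq_mul_div, div_mul_eq_mul_div] at this
  refine ⟨key, fun hne => le_trans ?_ key⟩
  have hsq : (j : ℤ) ^ 2 - (k : ℤ) ^ 2 ≠ 0 := by
    rw [sub_ne_zero]
    exact_mod_cast fun h => hne (Nat.pow_left_injective two_ne_zero h)
  have hone : (1 : ℝ) ≤ |(j : ℝ) ^ 2 - (k : ℝ) ^ 2| := by
    exact_mod_cast Int.one_le_abs hsq
  gcongr
  linarith
end

section
/- Let N ≥ 2, let b, a ∈ ℂ^N, and let 1 ≤ j ≤ N−1. Let g_j ∈ ℂ^{2N} have components g_j(m) = (2N)^{-1/2} e^{iπ(1+j/N)m}, 0 ≤ m ≤ 2N−1. Then the bilinear pairing of L_p(b,a) g_j with g_j satisfies Σ_{m=0}^{2N−1} (L_p(b,a) g_j)(m) · g_j(m) = N^{-1/2} ( b̂_j − 2 e^{iπj/N} â_j ). -/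
open scoped BigOperators

/-- Discrete Fourier transform of `u ∈ ℂ^N`, extended `N`-periodically in `k ∈ ℤ`. -/
noncomputable def dft (N : ℕ) (u : ℕ → ℂ) (k : ℤ) : ℂ :=
  (1 / (Real.sqrt N : ℂ)) * ∑ j ∈ Finset.range N,
    u j * Complex.exp (2 * Real.pi * Complex.I * j * k / N)

/-- The perturbation `L_p(b,a)` of the doubled Jacobi matrix. -/
noncomputable def LpM (N : ℕ) (b a : ℕ → ℂ) : Matrix (Fin (2 * N)) (Fin (2 * N)) ℂ :=
  Matrix.of fun m n =>
    if (m : ℕ) = (n : ℕ) then b ((m : ℕ) % N)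
    else if ((m : ℕ) + 1) % (2 * N) = (n : ℕ) then a ((m : ℕ) % N)
    else if ((n : ℕ) + 1) % (2 * N) = (m : ℕ) then a ((n : ℕ) % N)
    else 0

/-- The vectors `g_j ∈ ℂ^{2N}`, `g_j(m) = (2N)^{-1/2} e^{iπ(1+j/N)m}`. -/
noncomputable def g (N : ℕ) (j : ℤ) : Fin (2 * N) → ℂ := fun m =>
  (1 / (Real.sqrt (2 * N) : ℂ)) *
    Complex.exp (Real.pi * Complex.I * (1 + (j : ℂ) / N) * (m : ℕ))

/-- Over two periods, a periodic function sums to twice its sum over one period. -/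
lemma sum_range_two_mul_of_periodic (N : ℕ) (f : ℕ → ℂ) (hf : Function.Periodic f N) :
    ∑ m ∈ Finset.range (2 * N), f m = 2 * ∑ m ∈ Finset.range N, f m := by
  rw [two_mul, Finset.sum_range_add, two_mul]
  congr 1
  exact Finset.sum_congr rfl fun m _ => by rw [add_comm, hf m]

/-- The three cases in the definition of `LpM` are disjoint, so its entries are sums of the
diagonal, upper and lower contributions. -/
lemma LpM_apply (N : ℕ) (hN : 2 ≤ N) (b a : ℕ → ℂ) (m n : Fin (2 * N)) :
    LpM N b a m n =
      (if (m : ℕ) = n then b ((m : ℕ) % N) else 0) +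
      (if ((m : ℕ) + 1) % (2 * N) = n then a ((m : ℕ) % N) else 0) +
      (if ((n : ℕ) + 1) % (2 * N) = m then a ((n : ℕ) % N) else 0) := by
  have succ_mod (k : Fin (2 * N)) : ((k : ℕ) + 1) % (2 * N) = k + 1 ∧ (k : ℕ) + 1 < 2 * N ∨
      ((k : ℕ) + 1) % (2 * N) = 0 ∧ (k : ℕ) + 1 = 2 * N := by
    rcases Nat.lt_or_ge ((k : ℕ) + 1) (2 * N) with h | h
    · exact Or.inl ⟨Nat.mod_eq_of_lt h, h⟩
    · have hk : (k : ℕ) + 1 = 2 * N := by omega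
      exact Or.inr ⟨by rw [hk, Nat.mod_self], hk⟩
  have hm := succ_mod m
  have hn := succ_mod n
  simp only [LpM, Matrix.of_apply]
  split_ifs <;> first | omega | simp

/-- The bilinear form of `LpM` on the restriction of a `2N`-periodic sequence. -/
lemma sum_LpM_mulVec_mul (N : ℕ) (hN : 2 ≤ N) (b a : ℕ → ℂ) (G : ℕ → ℂ)
    (hG : Function.Periodic G (2 * N)) :
    ∑ m : Fin (2 * N), ((LpM N b a).mulVec fun n => G n) m * G m =
      ∑ m ∈ Finset.range (2 * N), (b (m % N) * G m ^ 2 + 2 * a (m % N) * (G m * G (m + 1))) := by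
  have hsum (k : ℕ) (hk : k < 2 * N) (F : ℕ → ℂ) :
      ∑ n : Fin (2 * N), (if k = n then F n else 0) = F k := by
    rw [Fin.sum_univ_eq_sum_range (fun n => if k = n then F n else 0)]
    simp [hk]
  have hlt (m : ℕ) : (m + 1) % (2 * N) < 2 * N := Nat.mod_lt _ (by omega)
  have diag : ∑ m : Fin (2 * N), ∑ n : Fin (2 * N),
      (if (m : ℕ) = n then b ((m : ℕ) % N) * G n * G m else 0) =
        ∑ m : Fin (2 * N), b ((m : ℕ) % N) * G m ^ 2 :=
    Finset.sum_congr rfl fun m _ => by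
      rw [hsum m m.2 fun n => b ((m : ℕ) % N) * G n * G m]
      ring
  have upper : ∑ m : Fin (2 * N), ∑ n : Fin (2 * N),
      (if ((m : ℕ) + 1) % (2 * N) = n then a ((m : ℕ) % N) * G n * G m else 0) =
        ∑ m : Fin (2 * N), a ((m : ℕ) % N) * (G m * G (m + 1)) :=
    Finset.sum_congr rfl fun m _ => by
      rw [hsum _ (hlt m) fun n => a ((m : ℕ) % N) * G n * G m, hG.map_mod_nat]
      ring
  have lower : ∑ m : Fin (2 * N), ∑ n : Fin (2 * N),
      (if ((n : ℕ) + 1) % (2 * N) = m then a ((n : ℕ) % N) * G n * G m else 0) =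
        ∑ m : Fin (2 * N), a ((m : ℕ) % N) * (G m * G (m + 1)) := by
    rw [Finset.sum_comm]
    refine Finset.sum_congr rfl fun n _ => ?_
    rw [hsum _ (hlt n) fun m => a ((n : ℕ) % N) * G n * G m, hG.map_mod_nat]
    ring
  rw [← Fin.sum_univ_eq_sum_range
    fun m => b (m % N) * G m ^ 2 + 2 * a (m % N) * (G m * G (m + 1))]
  simp only [Matrix.mulVec, dotProduct, LpM_apply N hN, Finset.sum_mul, add_mul, ite_mul,
    zero_mul, Finset.sum_add_distrib, diag, upper, lower, two_mul (a _), add_assoc]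

/-- the bilinear pairing of `L_p(b,a) g_j` with `g_j` equals
`N^{-1/2}(b̂_j − 2 e^{iπj/N} â_j)`, for `1 ≤ j ≤ N−1`. -/
theorem stmt_10 (N : ℕ) (hN : 2 ≤ N) (b a : ℕ → ℂ) (j : ℕ)
    (hj1 : 1 ≤ j) (hj2 : j ≤ N - 1) :
    ∑ m : Fin (2 * N), ((LpM N b a).mulVec (g N j)) m * g N j m =
      (1 / (Real.sqrt N : ℂ)) *
        (dft N b j - 2 * Complex.exp (Real.pi * Complex.I * j / N) * dft N a j) := by
  have hN0 : (N : ℂ) ≠ 0 := by exact_mod_cast (by omega : N ≠ 0)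
  set e : ℂ := Complex.exp (Real.pi * Complex.I * j / N) with he
  set c : ℂ := 1 / (Real.sqrt (2 * N) : ℂ) with hc
  have hc2 : c ^ 2 = 1 / (2 * N) := by
    rw [hc, div_pow, one_pow, ← Complex.ofReal_pow, Real.sq_sqrt (by positivity)]
    push_cast
    rfl
  have hs2 : (1 / (Real.sqrt N : ℂ)) * (1 / (Real.sqrt N : ℂ)) = 1 / N := by
    rw [← sq, div_pow, one_pow, ← Complex.ofReal_pow, Real.sq_sqrt (by positivity)]
    push_cast
    rfl
  have hg (m : Fin (2 * N)) : g N j m = c * (-e) ^ (m : ℕ) := by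
    have hw : Complex.exp (Real.pi * Complex.I * (1 + (j : ℂ) / N)) = -e := by
      rw [mul_add, Complex.exp_add, mul_one, Complex.exp_pi_mul_I, he, mul_div_assoc]
      ring
    rw [← hw, ← Complex.exp_nat_mul]
    simp only [g, hc]
    push_cast
    ring_nf
  have he2N : (e ^ 2) ^ N = 1 := by
    rw [← pow_mul, he, ← Complex.exp_nat_mul, Complex.exp_eq_one_iff]
    exact ⟨j, by push_cast; field_simp⟩
  have hdft (u : ℕ → ℂ) : dft N u j =
      (1 / (Real.sqrt N : ℂ)) * ∑ m ∈ Finset.range N, u m * (e ^ 2) ^ m := by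
    refine congrArg _ (Finset.sum_congr rfl fun m _ => ?_)
    rw [← pow_mul, he, ← Complex.exp_nat_mul]
    push_cast
    ring_nf
  have hper : Function.Periodic (fun m : ℕ => c * (-e) ^ m) (2 * N) := fun m => by
    simp only [pow_add, pow_mul, neg_sq, he2N, mul_one]
  have hperiod : Function.Periodic
      (fun m : ℕ => (b (m % N) - 2 * e * a (m % N)) * (e ^ 2) ^ m) N := fun m => by
    simp only [Nat.add_mod_right, pow_add, he2N, mul_one]
  have hterm (m : ℕ) : b (m % N) * (c * (-e) ^ m) ^ 2 +
      2 * a (m % N) * ((c * (-e) ^ m) * (c * (-e) ^ (m + 1))) =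
        c ^ 2 * ((b (m % N) - 2 * e * a (m % N)) * (e ^ 2) ^ m) := by
    have : (e ^ 2) ^ m = (-e) ^ m * (-e) ^ m := by rw [← mul_pow]; ring
    rw [this]
    ring
  have hmod : ∑ m ∈ Finset.range N, (b (m % N) - 2 * e * a (m % N)) * (e ^ 2) ^ m =
      ∑ m ∈ Finset.range N, b m * (e ^ 2) ^ m -
        2 * e * ∑ m ∈ Finset.range N, a m * (e ^ 2) ^ m := by
    rw [Finset.mul_sum, ← Finset.sum_sub_distrib]
    refine Finset.sum_congr rfl fun m hm => ?_
    rw [Nat.mod_eq_of_lt (Finset.mem_range.mp hm)]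
    ring
  rw [show g N j = fun m : Fin (2 * N) => c * (-e) ^ (m : ℕ) from funext hg,
    sum_LpM_mulVec_mul N hN b a _ hper, Finset.sum_congr rfl fun m _ => hterm m,
    ← Finset.mul_sum, sum_range_two_mul_of_periodic N _ hperiod, hmod, hc2, hdft, hdft]
  set B := ∑ m ∈ Finset.range N, b m * (e ^ 2) ^ m
  set A := ∑ m ∈ Finset.range N, a m * (e ^ 2) ^ m
  calc 1 / (2 * (N : ℂ)) * (2 * (B - 2 * e * A)) = 1 / N * (B - 2 * e * A) := by field_simp
    _ = _ := by rw [← hs2]; ring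
end

section
/- Let N ≥ 2, let p, q ∈ ℂ^N with q_N := q_0, let ω_k = 2 sin(kπ/N), and for 1 ≤ k ≤ N−1 set ξ_k = (p̂_k + iω_k q̂_k)/√(2ω_k) and η_k = (p̂_{N−k} − iω_k q̂_{N−k})/√(2ω_k). Then (1/6) Σ_{j=0}^{N−1} (q_j − q_{j+1})³ = (1/(12√(2N))) [ Σ' (−1)^{(k₁+k₂+k₃)/N} √(ω_{k₁} ω_{k₂} ω_{k₃}) ( ξ_{k₁}ξ_{k₂}ξ_{k₃} + η_{k₁}η_{k₂}η_{k₃} ) + 3 Σ'' (−1)^{(k₁+k₂−k₃)/N} √(ω_{k₁} ω_{k₂} ω_{k₃}) ( ξ_{k₁}ξ_{k₂}η_{k₃} + η_{k₁}η_{k₂}ξ_{k₃} ) ], where Σ' runs over 1 ≤ k₁,k₂,k₃ ≤ N−1 with k₁+k₂+k₃ ≡ 0 (mod N) and Σ'' runs over 1 ≤ k₁,k₂,k₃ ≤ N−1 with k₁+k₂−k₃ ≡ 0 (mod N) (in both cases the exponent of −1 is the integer (k₁+k₂±k₃)/N). -/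
open scoped BigOperators

/-- The linear frequencies `ω_k = 2 sin(kπ/N)`. -/
noncomputable def om (N k : ℕ) : ℝ := 2 * Real.sin ((k : ℝ) * Real.pi / N)

/-- Orthogonality of the characters of `ℤ/Nℤ`. -/
lemma sum_exp_two_pi (N : ℕ) (hN : N ≠ 0) (m : ℤ) :
    ∑ j ∈ Finset.range N, Complex.exp (2 * Real.pi * Complex.I * m * j / N) =
      if m % (N : ℤ) = 0 then (N : ℂ) else 0 := by
  have hNC : (N : ℂ) ≠ 0 := by exact_mod_cast hN
  have hterm : ∀ j ∈ Finset.range N, Complex.exp (2 * Real.pi * Complex.I * m * j / N) =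
      Complex.exp (2 * Real.pi * Complex.I * m / N) ^ j := by
    intro j _
    rw [← Complex.exp_nat_mul]
    congr 1
    ring
  rw [Finset.sum_congr rfl hterm]
  split_ifs with h
  · obtain ⟨c, rfl⟩ := Int.dvd_of_emod_eq_zero h
    have h1 : Complex.exp (2 * Real.pi * Complex.I * ((N * c : ℤ) : ℂ) / N) = 1 := by
      rw [Complex.exp_eq_one_iff]
      refine ⟨c, ?_⟩
      push_cast
      field_simp
    simp only [h1, one_pow, Finset.sum_const, Finset.card_range, nsmul_eq_mul, mul_one]
  · have h1 : Complex.exp (2 * Real.pi * Complex.I * m / N) ≠ 1 := by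
      rw [Ne, Complex.exp_eq_one_iff]
      rintro ⟨c, hc⟩
      apply h
      have h2 : (m : ℂ) = N * c := by
        have := Complex.two_pi_I_ne_zero
        field_simp at hc
        linear_combination hc
      have h3 : m = N * c := by exact_mod_cast h2
      simp [h3]
    have h2 : Complex.exp (2 * Real.pi * Complex.I * m / N) ^ N = 1 := by
      rw [← Complex.exp_nat_mul, Complex.exp_eq_one_iff]
      refine ⟨m, ?_⟩
      field_simp
    rw [geom_sum_eq h1, h2]
    simp

/-- The character `e^{-iπm(2j+1)/N}` centred at the midpoint between the sites `j` and `j + 1`. -/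
noncomputable def midChar (N : ℕ) (m : ℤ) (j : ℕ) : ℂ :=
  Complex.exp (-(Real.pi * Complex.I * m * (2 * j + 1) / N))

lemma midChar_add (N : ℕ) (m n : ℤ) (j : ℕ) :
    midChar N (m + n) j = midChar N m j * midChar N n j := by
  simp only [midChar, ← Complex.exp_add]
  congr 1
  push_cast
  ring

lemma exp_neg_pi_mul_I_mul_int (c : ℤ) :
    Complex.exp (-(Real.pi * Complex.I * c)) = (-1 : ℂ) ^ c := by
  rw [show -(Real.pi * Complex.I * c) = ((-c : ℤ) : ℂ) * (Real.pi * Complex.I) by push_cast; ring,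
    Complex.exp_int_mul, Complex.exp_pi_mul_I, zpow_neg, ← inv_zpow]
  norm_num

lemma midChar_neg_self (N : ℕ) (hN : N ≠ 0) (j : ℕ) : midChar N (-(N : ℤ)) j = -1 := by
  have hNC : (N : ℂ) ≠ 0 := by exact_mod_cast hN
  have h := exp_neg_pi_mul_I_mul_int (-(2 * j + 1))
  rw [midChar]
  convert h using 2
  · push_cast
    field_simp
  · rw [Odd.neg_one_zpow]
    exact ⟨-(j : ℤ) - 1, by ring⟩

lemma sum_midChar (N : ℕ) (hN : N ≠ 0) (m : ℤ) :
    ∑ j ∈ Finset.range N, midChar N m j =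
      if m % (N : ℤ) = 0 then (N : ℂ) * (-1) ^ (m / (N : ℤ)) else 0 := by
  have hNC : (N : ℂ) ≠ 0 := by exact_mod_cast hN
  have hterm : ∀ j ∈ Finset.range N, midChar N m j =
      Complex.exp (-(Real.pi * Complex.I * m / N)) *
        Complex.exp (2 * Real.pi * Complex.I * (-m : ℤ) * j / N) := by
    intro j _
    rw [midChar, ← Complex.exp_add]
    congr 1
    push_cast
    ring
  rw [Finset.sum_congr rfl hterm, ← Finset.mul_sum, sum_exp_two_pi N hN]
  by_cases h : m % (N : ℤ) = 0
  · have h' : (-m) % (N : ℤ) = 0 :=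
      Int.emod_eq_zero_of_dvd (Int.dvd_of_emod_eq_zero h).neg_right
    rw [if_pos h, if_pos h', ← exp_neg_pi_mul_I_mul_int, mul_comm]
    congr 3
    have h3 : (m : ℂ) = N * (m / (N : ℤ) : ℤ) := by
      exact_mod_cast (Int.mul_ediv_cancel' (Int.dvd_of_emod_eq_zero h)).symm
    rw [mul_div_assoc]
    congr 1
    rw [div_eq_iff hNC, mul_comm]
    exact h3
  · have h' : ¬ (-m) % (N : ℤ) = 0 := fun h' =>
      h (Int.emod_eq_zero_of_dvd (by simpa using (Int.dvd_of_emod_eq_zero h').neg_right))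
    rw [if_neg h, if_neg h', mul_zero]

/-- The inverse discrete Fourier transform, evaluated at an arbitrary site modulo `N`. -/
lemma sum_dft_mul_exp (N : ℕ) (hN : N ≠ 0) (u : ℕ → ℂ) (j : ℕ) :
    ∑ k ∈ Finset.range N, dft N u k * Complex.exp (-(2 * Real.pi * Complex.I * j * k / N)) =
      Real.sqrt N * u (j % N) := by
  have hs : (Real.sqrt N : ℂ) * Real.sqrt N = N := by
    rw [← Complex.ofReal_mul, Real.mul_self_sqrt (Nat.cast_nonneg N), Complex.ofReal_natCast]
  have hs0 : (Real.sqrt N : ℂ) ≠ 0 := by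
    rw [Complex.ofReal_ne_zero, Real.sqrt_ne_zero']
    exact_mod_cast Nat.pos_of_ne_zero hN
  have hterm : ∀ k ∈ Finset.range N,
      dft N u k * Complex.exp (-(2 * Real.pi * Complex.I * j * k / N)) =
      ∑ l ∈ Finset.range N, (1 / (Real.sqrt N : ℂ)) * u l *
        Complex.exp (2 * Real.pi * Complex.I * ((l : ℤ) - j : ℤ) * k / N) := by
    intro k _
    rw [dft, Finset.mul_sum, Finset.sum_mul]
    refine Finset.sum_congr rfl fun l _ => ?_
    rw [show 2 * Real.pi * Complex.I * (((l : ℤ) - j : ℤ) : ℂ) * k / N =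
        2 * Real.pi * Complex.I * l * (k : ℤ) / N + -(2 * Real.pi * Complex.I * j * k / N) by
      push_cast; ring, Complex.exp_add]
    ring
  rw [Finset.sum_congr rfl hterm, Finset.sum_comm, Finset.sum_eq_single (j % N)]
  · have h : (((j % N : ℕ) : ℤ) - j) % (N : ℤ) = 0 := by
      push_cast
      simp [Int.sub_emod]
    rw [← Finset.mul_sum, sum_exp_two_pi N hN, if_pos h]
    field_simp
    linear_combination -u (j % N) * hs
  · intro l hl hlj
    have h : ¬ ((l : ℤ) - j) % (N : ℤ) = 0 := by
      intro h
      apply hlj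
      have h1 : (l : ℤ) % N = (j : ℤ) % N := Int.emod_eq_emod_iff_emod_sub_eq_zero.mpr h
      have h2 : l % N = j % N := by exact_mod_cast h1
      rwa [Nat.mod_eq_of_lt (Finset.mem_range.mp hl)] at h2
    rw [← Finset.mul_sum, sum_exp_two_pi N hN, if_neg h, mul_zero]
  · intro h
    exact absurd (Finset.mem_range.mpr (Nat.mod_lt _ (Nat.pos_of_ne_zero hN))) h

lemma I_mul_om_mul_midChar (N k j : ℕ) :
    Complex.I * om N k * midChar N k j =
      Complex.exp (-(2 * Real.pi * Complex.I * j * k / N)) -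
        Complex.exp (-(2 * Real.pi * Complex.I * (j + 1 : ℕ) * k / N)) := by
  have h1 : Complex.exp (-(2 * Real.pi * Complex.I * j * k / N)) =
      Complex.exp ((k * Real.pi / N) * Complex.I) * midChar N k j := by
    rw [midChar, ← Complex.exp_add]
    congr 1
    push_cast
    ring
  have h2 : Complex.exp (-(2 * Real.pi * Complex.I * (j + 1 : ℕ) * k / N)) =
      Complex.exp (-(k * Real.pi / N) * Complex.I) * midChar N k j := by
    rw [midChar, ← Complex.exp_add]
    congr 1
    push_cast
    ring
  rw [h1, h2, om]
  push_cast
  rw [Complex.sin]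
  linear_combination (Complex.exp (-(k * Real.pi / N) * Complex.I) -
    Complex.exp ((k * Real.pi / N) * Complex.I)) * midChar N k j * Complex.I_mul_I

/-- Fourier expansion of the differences `q_j - q_{j+1}`. -/
lemma sum_om_mul_dft_mul_midChar (N : ℕ) (hN : N ≠ 0) (q : ℕ → ℂ) (j : ℕ) (hj : j < N) :
    ∑ k ∈ Finset.Icc 1 (N - 1), Complex.I * om N k * dft N q k * midChar N k j =
      Real.sqrt N * (q j - q ((j + 1) % N)) := by
  have hset : Finset.range N = insert 0 (Finset.Icc 1 (N - 1)) := by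
    ext k
    simp only [Finset.mem_range, Finset.mem_insert, Finset.mem_Icc]
    omega
  have h0 : ∑ k ∈ Finset.Icc 1 (N - 1), Complex.I * om N k * dft N q k * midChar N k j =
      ∑ k ∈ Finset.range N, Complex.I * om N k * dft N q k * midChar N k j := by
    rw [hset, Finset.sum_insert (by simp)]
    simp [om]
  have hterm : ∀ k ∈ Finset.range N, Complex.I * om N k * dft N q k * midChar N k j =
      dft N q k * Complex.exp (-(2 * Real.pi * Complex.I * j * k / N)) -
        dft N q k * Complex.exp (-(2 * Real.pi * Complex.I * (j + 1 : ℕ) * k / N)) := by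
    intro k _
    linear_combination dft N q k * I_mul_om_mul_midChar N k j
  rw [h0, Finset.sum_congr rfl hterm, Finset.sum_sub_distrib, sum_dft_mul_exp N hN,
    sum_dft_mul_exp N hN, Nat.mod_eq_of_lt hj]
  ring

lemma om_pos {N k : ℕ} (hk : k ∈ Finset.Icc 1 (N - 1)) : 0 < om N k := by
  rw [Finset.mem_Icc] at hk
  have hN : (0 : ℝ) < N := by exact_mod_cast (by omega : 0 < N)
  have hk0 : (0 : ℝ) < k := by exact_mod_cast (by omega : 0 < k)
  have hkN : (k : ℝ) < N := by exact_mod_cast (by omega : k < N)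
  refine mul_pos two_pos (Real.sin_pos_of_pos_of_lt_pi (by positivity) ?_)
  rw [div_lt_iff₀ hN, mul_comm]
  exact mul_lt_mul_of_pos_left hkN Real.pi_pos

lemma om_sub {N k : ℕ} (hN : N ≠ 0) (hk : k ≤ N) : om N (N - k) = om N k := by
  have hNR : (N : ℝ) ≠ 0 := by exact_mod_cast hN
  rw [om, om, Nat.cast_sub hk, ← Real.sin_pi_sub ((k : ℝ) * Real.pi / N)]
  congr 2
  field_simp

lemma sqrt_mul_div_sqrt_two_mul {w : ℝ} (hw : 0 < w) (z : ℂ) :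
    (Real.sqrt w : ℂ) * (z / (Real.sqrt (2 * w) : ℂ)) = z / (Real.sqrt 2 : ℂ) := by
  have h1 : (Real.sqrt w : ℂ) ≠ 0 := by
    rw [Complex.ofReal_ne_zero]
    positivity
  rw [Real.sqrt_mul zero_le_two, Complex.ofReal_mul]
  field_simp

/-- Products of three trigonometric sums, summed over all sites. -/
lemma sum_mul_mul_midChar (N : ℕ) (S : Finset ℕ) (a b c : ℕ → ℂ) (r s t : ℤ) :
    ∑ j ∈ Finset.range N, (∑ k ∈ S, a k * midChar N (r * k) j) *
        (∑ k ∈ S, b k * midChar N (s * k) j) * (∑ k ∈ S, c k * midChar N (t * k) j) =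
      ∑ k₁ ∈ S, ∑ k₂ ∈ S, ∑ k₃ ∈ S, a k₁ * b k₂ * c k₃ *
        ∑ j ∈ Finset.range N, midChar N (r * k₁ + s * k₂ + t * k₃) j := by
  simp_rw [Finset.sum_mul_sum, Finset.sum_mul, Finset.mul_sum]
  rw [Finset.sum_comm]
  refine Finset.sum_congr rfl fun k₁ _ => ?_
  conv_rhs => rw [Finset.sum_comm]
  rw [Finset.sum_comm]
  refine Finset.sum_congr rfl fun k₃ _ => ?_
  rw [Finset.sum_comm]
  refine Finset.sum_congr rfl fun k₂ _ => Finset.sum_congr rfl fun j _ => ?_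
  rw [midChar_add, midChar_add]
  ring

lemma sum_midChar_neg (N : ℕ) (hN : N ≠ 0) (m : ℤ) :
    ∑ j ∈ Finset.range N, midChar N (-m) j = ∑ j ∈ Finset.range N, midChar N m j := by
  rw [sum_midChar N hN, sum_midChar N hN]
  by_cases h : m % (N : ℤ) = 0
  · have hd := Int.dvd_of_emod_eq_zero h
    rw [if_pos h, if_pos (Int.emod_eq_zero_of_dvd hd.neg_right), Int.neg_ediv_of_dvd hd,
      zpow_neg, ← inv_zpow]
    norm_num
  · have h' : ¬ (-m) % (N : ℤ) = 0 := fun h' =>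
      h (Int.emod_eq_zero_of_dvd (by simpa using (Int.dvd_of_emod_eq_zero h').neg_right))
    rw [if_neg h, if_neg h']

/-- expression of the cubic part `H₁ = (1/6)Σ(q_j−q_{j+1})³` of the Toda
Hamiltonian in the linear complex Birkhoff variables
`ξ_k = (p̂_k + iω_k q̂_k)/√(2ω_k)`, `η_k = (p̂_{N−k} − iω_k q̂_{N−k})/√(2ω_k)`. -/
theorem stmt_11 (N : ℕ) (hN : 2 ≤ N) (p q : ℕ → ℂ) (ξ η : ℕ → ℂ)
    (hξ : ∀ k ∈ Finset.Icc 1 (N - 1),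
      ξ k = (dft N p k + Complex.I * om N k * dft N q k) / (Real.sqrt (2 * om N k) : ℂ))
    (hη : ∀ k ∈ Finset.Icc 1 (N - 1),
      η k = (dft N p ((N : ℤ) - k) - Complex.I * om N k * dft N q ((N : ℤ) - k)) /
        (Real.sqrt (2 * om N k) : ℂ)) :
    (1 / 6 : ℂ) * ∑ j ∈ Finset.range N, (q j - q ((j + 1) % N)) ^ 3 =
      (1 / (12 * (Real.sqrt (2 * N) : ℂ))) *
        ((∑ k₁ ∈ Finset.Icc 1 (N - 1), ∑ k₂ ∈ Finset.Icc 1 (N - 1),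
            ∑ k₃ ∈ Finset.Icc 1 (N - 1),
              if (k₁ + k₂ + k₃) % N = 0 then
                (-1 : ℂ) ^ ((k₁ + k₂ + k₃) / N) *
                  (Real.sqrt (om N k₁) : ℂ) * (Real.sqrt (om N k₂) : ℂ) *
                    (Real.sqrt (om N k₃) : ℂ) *
                  (ξ k₁ * ξ k₂ * ξ k₃ + η k₁ * η k₂ * η k₃)
              else 0) +
          3 * ∑ k₁ ∈ Finset.Icc 1 (N - 1), ∑ k₂ ∈ Finset.Icc 1 (N - 1),
            ∑ k₃ ∈ Finset.Icc 1 (N - 1),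
              if ((k₁ : ℤ) + k₂ - k₃) % (N : ℤ) = 0 then
                (-1 : ℂ) ^ (((k₁ : ℤ) + k₂ - k₃) / (N : ℤ)) *
                  (Real.sqrt (om N k₁) : ℂ) * (Real.sqrt (om N k₂) : ℂ) *
                    (Real.sqrt (om N k₃) : ℂ) *
                  (ξ k₁ * ξ k₂ * η k₃ + η k₁ * η k₂ * ξ k₃)
              else 0) := by
  have hN0 : N ≠ 0 := by omega
  have hNC : (N : ℂ) ≠ 0 := by exact_mod_cast hN0
  set S := Finset.Icc 1 (N - 1) with hS
  set A : ℕ → ℂ := fun k => (Real.sqrt (om N k) : ℂ) * ξ k with hA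
  set B : ℕ → ℂ := fun k => (Real.sqrt (om N k) : ℂ) * η k with hB
  set X : ℕ → ℂ := fun j => ∑ k ∈ S, A k * midChar N (1 * k) j with hX
  set Y : ℕ → ℂ := fun j => ∑ k ∈ S, B k * midChar N ((-1) * k) j with hY
  have h2 : (Real.sqrt 2 : ℂ) * Real.sqrt 2 = 2 := by
    rw [← Complex.ofReal_mul, Real.mul_self_sqrt zero_le_two, Complex.ofReal_ofNat]
  have h20 : (Real.sqrt 2 : ℂ) ≠ 0 := fun h => by simp [h] at h2
  have hs : (Real.sqrt N : ℂ) * Real.sqrt N = N := by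
    rw [← Complex.ofReal_mul, Real.mul_self_sqrt (Nat.cast_nonneg N), Complex.ofReal_natCast]
  have hs0 : (Real.sqrt N : ℂ) ≠ 0 := fun h => hNC (by rw [← hs, h, zero_mul])
  have hsplit : (Real.sqrt (2 * N) : ℂ) = Real.sqrt 2 * Real.sqrt N := by
    rw [Real.sqrt_mul zero_le_two, Complex.ofReal_mul]
  have hdiff : ∀ j ∈ Finset.range N,
      X j + Y j = Real.sqrt 2 * Real.sqrt N * (q j - q ((j + 1) % N)) := by
    intro j hj
    have hreflect : Y j = ∑ k ∈ S, B (N - k) * midChar N ((-1) * (N - k : ℕ)) j := by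
      refine Finset.sum_nbij' (fun k => N - k) (fun k => N - k) ?_ ?_ ?_ ?_ ?_
      · intro k hk
        simp only [hS, Finset.mem_Icc] at hk ⊢
        omega
      · intro k hk
        simp only [hS, Finset.mem_Icc] at hk ⊢
        omega
      · intro k hk
        simp only [hS, Finset.mem_Icc] at hk ⊢
        omega
      · intro k hk
        simp only [hS, Finset.mem_Icc] at hk ⊢
        omega
      · intro k hk
        have hk' : N - (N - k) = k := by
          simp only [hS, Finset.mem_Icc] at hk
          omega
        simp only [hk']
    rw [hreflect, ← Finset.sum_add_distrib, mul_assoc,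
      ← sum_om_mul_dft_mul_midChar N hN0 q j (Finset.mem_range.mp hj), Finset.mul_sum]
    refine Finset.sum_congr rfl fun k hk => ?_
    have hkN : 1 ≤ k ∧ k ≤ N - 1 := Finset.mem_Icc.mp hk
    have hk' : N - k ∈ S := Finset.mem_Icc.mpr (by omega)
    have hcast : (N : ℤ) - (N - k : ℕ) = k := by omega
    have hAk : A k = (dft N p k + Complex.I * om N k * dft N q k) / (Real.sqrt 2 : ℂ) := by
      simp only [hA]
      rw [hξ k hk, sqrt_mul_div_sqrt_two_mul (om_pos hk)]
    have hBk : B (N - k) = (dft N p k - Complex.I * om N k * dft N q k) / (Real.sqrt 2 : ℂ) := by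
      simp only [hB]
      rw [hη (N - k) hk', sqrt_mul_div_sqrt_two_mul (om_pos hk'), hcast,
        om_sub hN0 (by omega)]
    have hchar : midChar N ((-1) * (N - k : ℕ)) j = -midChar N k j := by
      rw [show (-1 : ℤ) * (N - k : ℕ) = -(N : ℤ) + k by omega, midChar_add,
        midChar_neg_self N hN0, neg_one_mul]
    rw [hAk, hBk, hchar, one_mul]
    field_simp
    linear_combination -Complex.I * om N k * dft N q k * midChar N k j * h2
  have hXXX := sum_mul_mul_midChar N S A A A 1 1 1
  have hYYY := sum_mul_mul_midChar N S B B B (-1) (-1) (-1)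
  have hXXY := sum_mul_mul_midChar N S A A B 1 1 (-1)
  have hYYX := sum_mul_mul_midChar N S B B A (-1) (-1) 1
  have hcube : (Real.sqrt 2 * Real.sqrt N : ℂ) ^ 3 *
      ∑ j ∈ Finset.range N, (q j - q ((j + 1) % N)) ^ 3 =
      (∑ j ∈ Finset.range N, X j * X j * X j + ∑ j ∈ Finset.range N, Y j * Y j * Y j) +
      3 * (∑ j ∈ Finset.range N, X j * X j * Y j + ∑ j ∈ Finset.range N, Y j * Y j * X j) := by
    rw [Finset.mul_sum, ← Finset.sum_add_distrib, ← Finset.sum_add_distrib, Finset.mul_sum,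
      ← Finset.sum_add_distrib]
    refine Finset.sum_congr rfl fun j hj => ?_
    rw [← mul_pow, ← hdiff j hj]
    ring
  have hplus : ∑ j ∈ Finset.range N, X j * X j * X j + ∑ j ∈ Finset.range N, Y j * Y j * Y j =
      N * ∑ k₁ ∈ S, ∑ k₂ ∈ S, ∑ k₃ ∈ S,
        if (k₁ + k₂ + k₃) % N = 0 then
          (-1 : ℂ) ^ ((k₁ + k₂ + k₃) / N) *
            (Real.sqrt (om N k₁) : ℂ) * (Real.sqrt (om N k₂) : ℂ) * (Real.sqrt (om N k₃) : ℂ) *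
            (ξ k₁ * ξ k₂ * ξ k₃ + η k₁ * η k₂ * η k₃)
        else 0 := by
    rw [hXXX, hYYY]
    simp only [← Finset.sum_add_distrib, Finset.mul_sum (s := S)]
    refine Finset.sum_congr rfl fun k₁ _ => Finset.sum_congr rfl fun k₂ _ =>
      Finset.sum_congr rfl fun k₃ _ => ?_
    rw [show (-1 : ℤ) * k₁ + -1 * k₂ + -1 * k₃ = -((k₁ + k₂ + k₃ : ℕ) : ℤ) by push_cast; ring,
      show (1 : ℤ) * k₁ + 1 * k₂ + 1 * k₃ = ((k₁ + k₂ + k₃ : ℕ) : ℤ) by push_cast; ring,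
      sum_midChar_neg N hN0, sum_midChar N hN0, ← Int.natCast_mod, ← Int.natCast_div, zpow_natCast]
    simp only [Int.natCast_eq_zero, hA, hB]
    split_ifs <;> ring
  have hminus : ∑ j ∈ Finset.range N, X j * X j * Y j + ∑ j ∈ Finset.range N, Y j * Y j * X j =
      N * ∑ k₁ ∈ S, ∑ k₂ ∈ S, ∑ k₃ ∈ S,
        if ((k₁ : ℤ) + k₂ - k₃) % (N : ℤ) = 0 then
          (-1 : ℂ) ^ (((k₁ : ℤ) + k₂ - k₃) / (N : ℤ)) *
            (Real.sqrt (om N k₁) : ℂ) * (Real.sqrt (om N k₂) : ℂ) * (Real.sqrt (om N k₃) : ℂ) *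
            (ξ k₁ * ξ k₂ * η k₃ + η k₁ * η k₂ * ξ k₃)
        else 0 := by
    rw [hXXY, hYYX]
    simp only [← Finset.sum_add_distrib, Finset.mul_sum (s := S)]
    refine Finset.sum_congr rfl fun k₁ _ => Finset.sum_congr rfl fun k₂ _ =>
      Finset.sum_congr rfl fun k₃ _ => ?_
    rw [show (-1 : ℤ) * k₁ + -1 * k₂ + 1 * k₃ = -((k₁ : ℤ) + k₂ - k₃) by ring,
      show (1 : ℤ) * k₁ + 1 * k₂ + -1 * k₃ = (k₁ : ℤ) + k₂ - k₃ by ring,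
      sum_midChar_neg N hN0, sum_midChar N hN0]
    simp only [hA, hB]
    split_ifs <;> ring
  rw [hplus, hminus] at hcube
  rw [hsplit]
  have hscale : (Real.sqrt 2 * Real.sqrt N : ℂ) ^ 3 = 2 * N * (Real.sqrt 2 * Real.sqrt N) := by
    linear_combination (Real.sqrt 2 * Real.sqrt N * (Real.sqrt N * Real.sqrt N) : ℂ) * h2 +
      (2 * Real.sqrt 2 * Real.sqrt N : ℂ) * hs
  rw [hscale] at hcube
  generalize (∑ j ∈ Finset.range N, (q j - q ((j + 1) % N)) ^ 3) = L at hcube ⊢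
  rw [one_div_mul_eq_div (12 * _), eq_div_iff (mul_ne_zero (by norm_num) (mul_ne_zero h20 hs0))]
  apply mul_left_cancel₀ hNC
  linear_combination hcube
end
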